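/- The assignment of Proposition 3.4 defines an irreducible representation of the type-B generalized quantum group: for any (ε₁,…,ε_n) ∈ {0,1}^n and nonzero parameter x (an indeterminate over ℂ(q^{1/2})), the operators e_i, f_i, k_i^{±1} (0 ≤ i ≤ n) of the type-B action π_x on 𝒲 satisfy k_i k_i^{−1} = k_i^{−1} k_i = 1, k_i k_j = k_j k_i, k_i e_j = D_{i,j} e_j k_i, k_i f_j = D_{i,j}^{−1} f_j k_i and e_i f_j − f_j e_i = δ_{i,j}(k_i − k_i^{−1})/(r_i − r_i^{−1}) for all 0 ≤ i,j ≤ n, where r_0 = r_n = p and r_i = q for 0 < i < n; moreover, the only subspaces of 𝒲 invariant under all of these operators are {0} and 𝒲. -/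

import Mathlib

/-! The representation is built from `q`-oscillators. At every position `p` let `a⁺_p` and `a⁻_p`
be the raising operator (`up`) and the lowering operator with matrix element `[m_p]` (`dn`), and
let `t_p` be the diagonal operator with eigenvalue `q_p^{m_p}` (`tv`). Operators at different
positions commute, and, for bosonic and fermionic positions alike,
`a⁺a⁻ = (t - t⁻¹)/(q - q⁻¹)` and `a⁻a⁺ = (q t - q⁻¹ t⁻¹)/(q - q⁻¹)`
(`up_dn_self`, `dn_up_self`); in the fermionic case these encode the exclusion rule.

The generators factor as `e_r = a⁺_r a⁻_{r-1}` and `f_r = a⁺_{r-1} a⁻_r` (0-based positions), with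
scalars replacing the missing factors at the two ends. If `i ≠ j`, every factor of `e_i` commutes
with every factor of `f_j` (`e_f_commute`). If `i = j`, the oscillator relations reduce the
commutator to a rational identity in the eigenvalues of the `t_p` (`e_f_self`); at the ends it
needs `p² = -q⁻¹`. For the Cartan relations, `e_j` shifts occupation vectors by a fixed vector
`eta j`, the eigenvalue `wt i m` of `k_i` is a constant times `∏ q_p^{eta i p · m_p}`, and `D_{i,j}`
equals `∏ q_p^{eta i p · eta j p}` (`DB_eq`).

Irreducibility: since `q` is not a root of unity, the `k_r` separate the basis vectors
(`wt_separates`), so a nonzero invariant subspace contains some `|m⟩` (`exists_single_mem`). Moving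
the rightmost particle to the right and finally out of the system links `|m⟩` to the vacuum by
generators `e_r`, and the corresponding `f_r` go back, all with nonzero matrix elements
(`single_mem_iff_vac`). Hence the subspace contains every basis vector.
-/

open scoped BigOperators

set_option synthInstance.maxHeartbeats 1000000
set_option maxHeartbeats 1000000

noncomputable section

namespace TetraGQ

/-! ## Scalar ingredients -/

/-- `(a;qb)_m = ∏_{k=0}^{m-1} (1 - a qb^k)`. -/
def poch (qb a : ℂ) (m : ℕ) : ℂ := ∏ k ∈ Finset.range m, (1 - a * qb ^ k)

/-- The `q`-binomial `binom(m,k)_qb`, zero unless `k ≤ m`. -/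
def qbinom (qb : ℂ) (m k : ℕ) : ℂ :=
  if k ≤ m then poch qb qb m / (poch qb qb k * poch qb qb (m - k)) else 0

/-- `[m] = (q^m - q^{-m})/(q - q^{-1})`. -/
def qnum (q : ℂ) (m : ℕ) : ℂ := (q ^ m - q⁻¹ ^ m) / (q - q⁻¹)

/-- `[m]! = ∏_{k=1}^m [k]`. -/
def qfac (q : ℂ) (m : ℕ) : ℂ := ∏ k ∈ Finset.range m, qnum q (k + 1)

/-- The symmetric `q`-binomial `[m choose k]`, zero unless `k ≤ m`. -/
def qbin (q : ℂ) (m k : ℕ) : ℂ :=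
  if k ≤ m then qfac q m / (qfac q k * qfac q (m - k)) else 0

/-- The 3D `R` matrix entry `R^{a,b,c}_{i,j,k}`. -/
def R3 (q : ℂ) (a b c i j k : ℕ) : ℂ :=
  (if a + b = i + j ∧ b + c = j + k then (1 : ℂ) else 0) *
    ∑ lam ∈ Finset.range (b + 1),
      (-1 : ℂ) ^ lam *
        q ^ ((i : ℤ) * ((c : ℤ) - (j : ℤ)) + ((k : ℤ) + 1) * (lam : ℤ) +
            ((b : ℤ) - (lam : ℤ)) * ((b : ℤ) - (lam : ℤ) - (k : ℤ))) *
        (poch (q ^ 2) (q ^ 2) (c + (b - lam)) / poch (q ^ 2) (q ^ 2) c) *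
        qbinom (q ^ 2) i (b - lam) * qbinom (q ^ 2) j lam

/-- The 3D `L` matrix entry `L^{a,b,c}_{i,j,k}`. -/
def L3 (q : ℂ) (a b c i j k : ℕ) : ℂ :=
  if a = 0 ∧ b = 0 ∧ i = 0 ∧ j = 0 ∧ c = k then 1
  else if a = 1 ∧ b = 1 ∧ i = 1 ∧ j = 1 ∧ c = k then 1
  else if a = 0 ∧ b = 1 ∧ i = 0 ∧ j = 1 ∧ c = k then -q ^ (k + 1)
  else if a = 1 ∧ b = 0 ∧ i = 1 ∧ j = 0 ∧ c = k then q ^ k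
  else if a = 0 ∧ b = 1 ∧ i = 1 ∧ j = 0 ∧ c + 1 = k then 1 - q ^ (2 * k)
  else if a = 1 ∧ b = 0 ∧ i = 0 ∧ j = 1 ∧ c = k + 1 then 1
  else 0

/-- `S^(0) = R`, `S^(1) = L`. -/
def Sg (q : ℂ) (e : Bool) (a b c i j k : ℕ) : ℂ :=
  if e then L3 q a b c i j k else R3 q a b c i j k

/-- Coefficient of `z^{c0}` in the trace solution matrix element
`S₀(z)^{a,b}_{i,j}`. -/
def trCoef (q : ℂ) {n : ℕ} [NeZero n] (ε : Fin n → Bool) (a b i j : Fin n → ℕ)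
    (c0 : ℕ) : ℂ :=
  ∑ᶠ c : Fin n → ℕ,
    if c 0 = c0 then
      ∏ t : Fin n, Sg q (ε t) (a t) (b t) (c t) (i t) (j t) (c (t + 1))
    else 0

/-- Coefficient of `z^{c0}` in the boundary solution matrix element
`S₀^{1,1}(z)^{a,b}_{i,j}`. -/
def bdCoef (q : ℂ) {n : ℕ} (ε : Fin n → Bool) (a b i j : Fin n → ℕ) (c0 : ℕ) : ℂ :=
  ∑ᶠ c : Fin (n + 1) → ℕ,
    if c 0 = c0 then
      poch (q ^ 2) (q ^ 2) c0 / (poch q q c0 * poch q q (c (Fin.last n))) *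
        ∏ t : Fin n, Sg q (ε t) (a t) (b t) (c t.castSucc) (i t) (j t) (c t.succ)
    else 0

/-- Coefficient of `z^{c0}` in the boundary solution matrix element
`S₀^{s,t}(z)^{a,b}_{i,j}`. -/
def bdCoefST (q : ℂ) (s t : ℕ) {n : ℕ} (ε : Fin n → Bool) (a b i j : Fin n → ℕ)
    (c0 : ℕ) : ℂ :=
  ∑ᶠ c : Fin (n + 1) → ℕ,
    if c 0 = c0 then
      poch (q ^ 2) (q ^ 2) (s * c0) /
          (poch (q ^ s ^ 2) (q ^ s ^ 2) c0 * poch (q ^ t ^ 2) (q ^ t ^ 2) (c (Fin.last n))) *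
        ∏ u : Fin n,
          Sg q (ε u) (a u) (b u)
            (if u.castSucc = 0 then s * c0 else c u.castSucc) (i u) (j u)
            (if u.succ = Fin.last n then t * c (Fin.last n) else c u.succ)
    else 0

/-! ## The spaces `𝒲` and `𝒲⊗𝒲` -/

/-- `m` is an admissible occupation vector: at positions with `ε = 1` the entry is `≤ 1`. -/
def Ok {n : ℕ} (ε : Fin n → Bool) (m : Fin n → ℕ) : Prop := ∀ t, ε t = true → m t ≤ 1

instance {n : ℕ} (ε : Fin n → Bool) : DecidablePred (Ok ε) := fun m =>
  decidable_of_iff (∀ t, ε t = true → m t ≤ 1) Iff.rfl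

/-- Basis labels of `𝒲`. -/
def Idx {n : ℕ} (ε : Fin n → Bool) : Type := {m : Fin n → ℕ // Ok ε m}

/-- The space `𝒲` with basis `|m⟩`, over the field `L`. -/
abbrev W (L : Type) [Field L] {n : ℕ} (ε : Fin n → Bool) : Type := Idx ε →₀ L

/-- The space `𝒲 ⊗ 𝒲` with basis `|a⟩⊗|b⟩`, over the field `L`. -/
abbrev WW (L : Type) [Field L] {n : ℕ} (ε : Fin n → Bool) : Type := (Idx ε × Idx ε) →₀ L

/-- The ket `|m⟩ ∈ 𝒲`; it is `0` if any coordinate is out of range. -/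
def ket (L : Type) [Field L] {n : ℕ} (ε : Fin n → Bool) (m : Fin n → ℤ) : W L ε :=
  if h : (∀ t, 0 ≤ m t) ∧ Ok ε (fun t => (m t).toNat) then
    Finsupp.single ⟨fun t => (m t).toNat, h.2⟩ 1
  else 0

/-- The ket `|a⟩⊗|b⟩ ∈ 𝒲⊗𝒲`; it is `0` if any coordinate is out of range. -/
def kk (L : Type) [Field L] {n : ℕ} (ε : Fin n → Bool) (a b : Fin n → ℤ) : WW L ε :=
  if h : ((∀ t, 0 ≤ a t) ∧ Ok ε (fun t => (a t).toNat)) ∧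
      ((∀ t, 0 ≤ b t) ∧ Ok ε (fun t => (b t).toNat)) then
    Finsupp.single (⟨fun t => (a t).toNat, h.1.2⟩, ⟨fun t => (b t).toNat, h.2.2⟩) 1
  else 0

/-- The linear endomorphism of a free module determined by images of basis vectors. -/
def mkEnd (L : Type) [Field L] {α : Type} (v : α → (α →₀ L)) :
    (α →₀ L) →ₗ[L] (α →₀ L) :=
  Finsupp.lsum L fun m => LinearMap.toSpanSingleton L (α →₀ L) (v m)

/-- Product of vectors of `𝒲`, landing in `𝒲⊗𝒲`. -/
def tens (L : Type) [Field L] {n : ℕ} {ε : Fin n → Bool} (u v : W L ε) : WW L ε :=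
  u.sum fun a ca => v.sum fun b cb => Finsupp.single (a, b) (ca * cb)

/-- The operator `A ⊗ B` on `𝒲⊗𝒲`. -/
def opT (L : Type) [Field L] {n : ℕ} {ε : Fin n → Bool}
    (A B : W L ε →ₗ[L] W L ε) : WW L ε →ₗ[L] WW L ε :=
  mkEnd L fun mm => tens L (A (Finsupp.single mm.1 1)) (B (Finsupp.single mm.2 1))

/-- The subspace `𝒲_l ⊗ 𝒲_m` of `𝒲⊗𝒲`. -/
def WWlm (L : Type) [Field L] {n : ℕ} (ε : Fin n → Bool) (l m : ℕ) :
    Submodule L (WW L ε) :=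
  Submodule.span L {v | ∃ p : Idx ε × Idx ε,
    (∑ t, p.1.1 t) = l ∧ (∑ t, p.2.1 t) = m ∧ v = Finsupp.single p 1}

/-- The subspace `𝒲_l` of `𝒲`. -/
def Wl (L : Type) [Field L] {n : ℕ} (ε : Fin n → Bool) (l : ℕ) : Submodule L (W L ε) :=
  Submodule.span L {v | ∃ p : Idx ε, (∑ t, p.1 t) = l ∧ v = Finsupp.single p 1}

/-! ## The scalar field of formal Laurent series in `z` over `ℂ` -/

abbrev K : Type := LaurentSeries ℂ

/-- The power series `Σ_{c≥0} f(c) z^c` as an element of `K`. -/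
def mkS (f : ℕ → ℂ) : K := HahnSeries.ofPowerSeries ℤ ℂ (PowerSeries.mk f)

/-- Constants `ℂ → K`. -/
def cK : ℂ →+* K := HahnSeries.C

/-- The variable `z ∈ K`. -/
def zK : K := mkS fun c => if c = 1 then 1 else 0

/-! ## The solutions of the Yang-Baxter equation -/

/-- The unnormalized trace solution `S₀(z)` acting on `𝒲⊗𝒲`. -/
def S0tr (q : ℂ) {n : ℕ} [NeZero n] (ε : Fin n → Bool) : WW K ε →ₗ[K] WW K ε :=
  mkEnd K fun ij =>
    ∑ a ∈ Fintype.piFinset (fun t => Finset.range (ij.1.1 t + ij.2.1 t + 1)),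
      mkS (trCoef q ε a (fun t => ij.1.1 t + ij.2.1 t - a t) ij.1.1 ij.2.1) •
        kk K ε (fun t => (a t : ℤ)) (fun t => (ij.1.1 t : ℤ) + (ij.2.1 t : ℤ) - (a t : ℤ))

/-- The unnormalized boundary solution `S₀^{1,1}(z)` acting on `𝒲⊗𝒲`. -/
def S0bd (q : ℂ) {n : ℕ} (ε : Fin n → Bool) : WW K ε →ₗ[K] WW K ε :=
  mkEnd K fun ij =>
    ∑ a ∈ Fintype.piFinset (fun t => Finset.range (ij.1.1 t + ij.2.1 t + 1)),
      mkS (bdCoef q ε a (fun t => ij.1.1 t + ij.2.1 t - a t) ij.1.1 ij.2.1) •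
        kk K ε (fun t => (a t : ℤ)) (fun t => (ij.1.1 t : ℤ) + (ij.2.1 t : ℤ) - (a t : ℤ))

/-- The unnormalized boundary solution `S₀^{s,t}(z)` acting on `𝒲⊗𝒲`. -/
def S0bdST (q : ℂ) (s t : ℕ) {n : ℕ} (ε : Fin n → Bool) : WW K ε →ₗ[K] WW K ε :=
  mkEnd K fun ij =>
    ∑ a ∈ Fintype.piFinset (fun u => Finset.range (ij.1.1 u + ij.2.1 u + 1)),
      mkS (bdCoefST q s t ε a (fun u => ij.1.1 u + ij.2.1 u - a u) ij.1.1 ij.2.1) •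
        kk K ε (fun u => (a u : ℤ)) (fun u => (ij.1.1 u : ℤ) + (ij.2.1 u : ℤ) - (a u : ℤ))

/-- The diagonal gauge operator; `Kdiag pc ε s |m⟩ = pc^{s·(m₁+⋯+m_n)} |m⟩`
(`s = -1` gives `K`, `s = 1` gives `K⁻¹`). -/
def Kdiag (pc : ℂ) {n : ℕ} (ε : Fin n → Bool) (s : ℤ) : W K ε →ₗ[K] W K ε :=
  mkEnd K fun m => cK (pc ^ (s * ∑ t, (m.1 t : ℤ))) • Finsupp.single m 1

/-- The gauge transformed boundary solution `S̃₀^{1,1}(z) = (K⊗1) S₀^{1,1}(z) (1⊗K⁻¹)`. -/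
def S0bdT (q pc : ℂ) {n : ℕ} (ε : Fin n → Bool) : WW K ε →ₗ[K] WW K ε :=
  opT K (Kdiag pc ε (-1)) LinearMap.id ∘ₗ S0bd q ε ∘ₗ opT K LinearMap.id (Kdiag pc ε 1)

/-! ## The generalized quantum group actions -/

/-- Value of an occupation vector at a natural-number position. -/
def av {n : ℕ} (m : Fin n → ℕ) (p : ℕ) : ℕ := if h : p < n then m ⟨p, h⟩ else 0

/-- Unit coordinate vector at a natural-number position. -/
def dlt {n : ℕ} (p : ℕ) : Fin n → ℤ := fun t => if (t : ℕ) = p then 1 else 0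

/-- `q_i = q` if `ε_i = 0` and `-q⁻¹` if `ε_i = 1` (0-based positions). -/
def qc (q : ℂ) {n : ℕ} (ε : Fin n → Bool) (p : ℕ) : ℂ :=
  if h : p < n then (if ε ⟨p, h⟩ then -q⁻¹ else q) else q

/-- Type A generator `e_r` of the action `π_x`. -/
def eA (q : ℂ) {L : Type} [Field L] (ι : ℂ →+* L) {n : ℕ} (ε : Fin n → Bool) (x : L)
    (r : Fin n) : W L ε →ₗ[L] W L ε :=
  mkEnd L fun m =>
    (x ^ (if (r : ℕ) = 0 then 1 else 0) * ι (qnum q (av m.1 (((r : ℕ) + n - 1) % n)))) •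
      ket L ε fun t => (m.1 t : ℤ) - dlt (((r : ℕ) + n - 1) % n) t + dlt (r : ℕ) t

/-- Type A generator `f_r` of the action `π_x`. -/
def fA (q : ℂ) {L : Type} [Field L] (ι : ℂ →+* L) {n : ℕ} (ε : Fin n → Bool) (x : L)
    (r : Fin n) : W L ε →ₗ[L] W L ε :=
  mkEnd L fun m =>
    (x ^ (if (r : ℕ) = 0 then (-1 : ℤ) else 0) * ι (qnum q (av m.1 (r : ℕ)))) •
      ket L ε fun t => (m.1 t : ℤ) + dlt (((r : ℕ) + n - 1) % n) t - dlt (r : ℕ) t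

/-- Type A generator `k_r^{s}` (`s = ±1`) of the action `π_x`. -/
def kA (q : ℂ) {L : Type} [Field L] (ι : ℂ →+* L) {n : ℕ} (ε : Fin n → Bool) (s : ℤ)
    (r : Fin n) : W L ε →ₗ[L] W L ε :=
  mkEnd L fun m =>
    ι ((qc q ε (((r : ℕ) + n - 1) % n) ^ (-(av m.1 (((r : ℕ) + n - 1) % n) : ℤ)) *
        qc q ε (r : ℕ) ^ (av m.1 (r : ℕ) : ℤ)) ^ s) • Finsupp.single m 1

/-- Type B generator `e_r` of the action `π_x`. -/
def eB (q : ℂ) {L : Type} [Field L] (ι : ℂ →+* L) {n : ℕ} (ε : Fin n → Bool) (x : L)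
    (r : Fin (n + 1)) : W L ε →ₗ[L] W L ε :=
  mkEnd L fun m =>
    if (r : ℕ) = 0 then x • ket L ε (fun t => (m.1 t : ℤ) + dlt 0 t)
    else if (r : ℕ) = n then
      ι (qnum q (av m.1 (n - 1))) • ket L ε (fun t => (m.1 t : ℤ) - dlt (n - 1) t)
    else
      ι (qnum q (av m.1 ((r : ℕ) - 1))) •
        ket L ε (fun t => (m.1 t : ℤ) - dlt ((r : ℕ) - 1) t + dlt (r : ℕ) t)

/-- Type B generator `f_r` of the action `π_x`. -/
def fB (q : ℂ) {L : Type} [Field L] (ι : ℂ →+* L) {n : ℕ} (ε : Fin n → Bool) (x : L)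
    (r : Fin (n + 1)) : W L ε →ₗ[L] W L ε :=
  mkEnd L fun m =>
    if (r : ℕ) = 0 then
      (x⁻¹ * ι (qnum q (av m.1 0))) • ket L ε (fun t => (m.1 t : ℤ) - dlt 0 t)
    else if (r : ℕ) = n then ket L ε (fun t => (m.1 t : ℤ) + dlt (n - 1) t)
    else
      ι (qnum q (av m.1 (r : ℕ))) •
        ket L ε (fun t => (m.1 t : ℤ) + dlt ((r : ℕ) - 1) t - dlt (r : ℕ) t)

/-- Type B generator `k_r^{s}` (`s = ±1`) of the action `π_x`; `pc = i q^{-1/2}`. -/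
def kB (q pc : ℂ) {L : Type} [Field L] (ι : ℂ →+* L) {n : ℕ} (ε : Fin n → Bool) (s : ℤ)
    (r : Fin (n + 1)) : W L ε →ₗ[L] W L ε :=
  mkEnd L fun m =>
    ι ((if (r : ℕ) = 0 then pc⁻¹ * qc q ε 0 ^ (av m.1 0 : ℤ)
        else if (r : ℕ) = n then pc * qc q ε (n - 1) ^ (-(av m.1 (n - 1) : ℤ))
        else qc q ε ((r : ℕ) - 1) ^ (-(av m.1 ((r : ℕ) - 1) : ℤ)) *
          qc q ε (r : ℕ) ^ (av m.1 (r : ℕ) : ℤ)) ^ s) • Finsupp.single m 1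

/-! ## Coproduct actions on `𝒲⊗𝒲` (type A) -/

/-- `Δ(e_r) = 1⊗e_r + e_r⊗k_r`, with `π_x` on the first factor, `π_y` on the second. -/
def dE (q : ℂ) {L : Type} [Field L] (ι : ℂ →+* L) {n : ℕ} (ε : Fin n → Bool) (x y : L)
    (r : Fin n) : WW L ε →ₗ[L] WW L ε :=
  opT L LinearMap.id (eA q ι ε y r) + opT L (eA q ι ε x r) (kA q ι ε 1 r)

/-- `Δ'(e_r) = e_r⊗1 + k_r⊗e_r`. -/
def dE' (q : ℂ) {L : Type} [Field L] (ι : ℂ →+* L) {n : ℕ} (ε : Fin n → Bool) (x y : L)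
    (r : Fin n) : WW L ε →ₗ[L] WW L ε :=
  opT L (eA q ι ε x r) LinearMap.id + opT L (kA q ι ε 1 r) (eA q ι ε y r)

/-- `Δ(f_r) = f_r⊗1 + k_r⁻¹⊗f_r`. -/
def dF (q : ℂ) {L : Type} [Field L] (ι : ℂ →+* L) {n : ℕ} (ε : Fin n → Bool) (x y : L)
    (r : Fin n) : WW L ε →ₗ[L] WW L ε :=
  opT L (fA q ι ε x r) LinearMap.id + opT L (kA q ι ε (-1) r) (fA q ι ε y r)

/-- `Δ'(f_r) = 1⊗f_r + f_r⊗k_r⁻¹`. -/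
def dF' (q : ℂ) {L : Type} [Field L] (ι : ℂ →+* L) {n : ℕ} (ε : Fin n → Bool) (x y : L)
    (r : Fin n) : WW L ε →ₗ[L] WW L ε :=
  opT L LinearMap.id (fA q ι ε y r) + opT L (fA q ι ε x r) (kA q ι ε (-1) r)

/-- `Δ(k_r^s) = Δ'(k_r^s) = k_r^s ⊗ k_r^s`. -/
def dK (q : ℂ) {L : Type} [Field L] (ι : ℂ →+* L) {n : ℕ} (ε : Fin n → Bool) (s : ℤ)
    (r : Fin n) : WW L ε →ₗ[L] WW L ε :=
  opT L (kA q ι ε s r) (kA q ι ε s r)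

/-! ## Coproduct actions on `𝒲⊗𝒲` (type B) -/

def dEB (q pc : ℂ) {L : Type} [Field L] (ι : ℂ →+* L) {n : ℕ} (ε : Fin n → Bool) (x y : L)
    (r : Fin (n + 1)) : WW L ε →ₗ[L] WW L ε :=
  opT L LinearMap.id (eB q ι ε y r) + opT L (eB q ι ε x r) (kB q pc ι ε 1 r)

def dEB' (q pc : ℂ) {L : Type} [Field L] (ι : ℂ →+* L) {n : ℕ} (ε : Fin n → Bool) (x y : L)
    (r : Fin (n + 1)) : WW L ε →ₗ[L] WW L ε :=
  opT L (eB q ι ε x r) LinearMap.id + opT L (kB q pc ι ε 1 r) (eB q ι ε y r)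

def dFB (q pc : ℂ) {L : Type} [Field L] (ι : ℂ →+* L) {n : ℕ} (ε : Fin n → Bool) (x y : L)
    (r : Fin (n + 1)) : WW L ε →ₗ[L] WW L ε :=
  opT L (fB q ι ε x r) LinearMap.id + opT L (kB q pc ι ε (-1) r) (fB q ι ε y r)

def dFB' (q pc : ℂ) {L : Type} [Field L] (ι : ℂ →+* L) {n : ℕ} (ε : Fin n → Bool) (x y : L)
    (r : Fin (n + 1)) : WW L ε →ₗ[L] WW L ε :=
  opT L LinearMap.id (fB q ι ε y r) + opT L (fB q ι ε x r) (kB q pc ι ε (-1) r)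

def dKB (q pc : ℂ) {L : Type} [Field L] (ι : ℂ →+* L) {n : ℕ} (ε : Fin n → Bool) (s : ℤ)
    (r : Fin (n + 1)) : WW L ε →ₗ[L] WW L ε :=
  opT L (kB q pc ι ε s r) (kB q pc ι ε s r)

/-! ## Structure constants -/

/-- Type A structure constant `D_{i,j}` (as a product over 0-based positions). -/
def DA (q : ℂ) {n : ℕ} (ε : Fin n → Bool) (i j : Fin n) : ℂ :=
  ∏ p ∈ (({((i : ℕ) + n - 1) % n, (i : ℕ)} : Finset ℕ) ∩
      ({((j : ℕ) + n - 1) % n, (j : ℕ)} : Finset ℕ)),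
    qc q ε p ^ (if i = j then (1 : ℤ) else -1)

/-- The set `⟨i⟩ = {i, i+1} ∩ [1,n]` of type B, translated to 0-based positions. -/
def nodeB (n i : ℕ) : Finset ℕ :=
  if i = 0 then {0} else if i = n then {n - 1} else {i - 1, i}

/-- Type B structure constant `D_{i,j}`. -/
def DB (q : ℂ) {n : ℕ} (ε : Fin n → Bool) (i j : Fin (n + 1)) : ℂ :=
  ∏ p ∈ nodeB n (i : ℕ) ∩ nodeB n (j : ℕ), qc q ε p ^ (if i = j then (1 : ℤ) else -1)

/-! ## Distinguished vectors -/

/-- The vector `J_{n,j} = Σ_{i, Σi=j} q^{inv(i)} |i⟩⊗|1-i⟩`. -/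
def Jfull (q : ℂ) {L : Type} [Field L] (ι : ℂ →+* L) {n : ℕ} (ε : Fin n → Bool)
    (j : ℕ) : WW L ε :=
  ∑ i ∈ Fintype.piFinset (fun _ : Fin n => Finset.range 2),
    (if (∑ t, i t) = j then
        ι (q ^ (∑ s : Fin n, ∑ t : Fin n, if s < t then i s * (1 - i t) else 0))
      else 0) •
      kk L ε (fun t => (i t : ℤ)) (fun t => 1 - (i t : ℤ))

/-- Extension of a `Fin s`-tuple to `ℕ` by zero. -/
def ivf {s : ℕ} (i : Fin s → ℕ) : ℕ → ℕ := fun p => if h : p < s then i ⟨p, h⟩ else 0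

/-- `inv(i₁,…,i_s) = Σ_{p<r} i_p (1 - i_r)`. -/
def invv (s : ℕ) (iv : ℕ → ℕ) : ℕ :=
  ∑ p ∈ Finset.range s, ∑ r ∈ Finset.range s, if p < r then iv p * (1 - iv r) else 0

/-- Occupation vector `(0^{nn-s-t}, i₁,…,i_s, 1^t)`. -/
def winA (nn s t : ℕ) (iv : ℕ → ℕ) : Fin nn → ℤ := fun u =>
  if (u : ℕ) < nn - s - t then 0
  else if (u : ℕ) < nn - t then (iv ((u : ℕ) - (nn - s - t)) : ℤ)
  else 1

/-- The singular vector `ξ_t^{l,m}` for `κ = n`. -/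
def xiA (q : ℂ) {L : Type} [Field L] (ι : ℂ →+* L) {n : ℕ} (ε : Fin n → Bool)
    (l m t : ℕ) : WW L ε :=
  ∑ i ∈ Fintype.piFinset (fun _ : Fin (l + m - 2 * t) => Finset.range 2),
    (if (∑ u, i u) = l - t then ι (q ^ invv (l + m - 2 * t) (ivf i)) else 0) •
      kk L ε (winA n (l + m - 2 * t) t (ivf i))
        (winA n (l + m - 2 * t) t (fun p => 1 - ivf i p))

/-- Occupation vector `(0^{nn-s-1}, i₁,…,i_s, last)`. -/
def winA1 (nn s : ℕ) (iv : ℕ → ℕ) (last : ℤ) : Fin nn → ℤ := fun u =>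
  if (u : ℕ) < nn - s - 1 then 0
  else if (u : ℕ) < nn - 1 then (iv ((u : ℕ) - (nn - s - 1)) : ℤ)
  else last

/-- The singular vector `ξ_s^{l,m}` for `κ = n-1`. -/
def xiA1 (q : ℂ) {L : Type} [Field L] (ι : ℂ →+* L) {n : ℕ} (ε : Fin n → Bool)
    (l m s : ℕ) : WW L ε :=
  ∑ j ∈ Finset.range (s + 1),
    ∑ i ∈ Fintype.piFinset (fun _ : Fin s => Finset.range 2),
      (if (∑ u, i u) = s - j then
          ι ((-1 : ℂ) ^ j * q ^ (j * (m - s + 1)) * q ^ invv s (ivf i))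
        else 0) •
        kk L ε (winA1 n s (ivf i) ((l : ℤ) + (j : ℤ) - (s : ℤ)))
          (winA1 n s (fun p => 1 - ivf i p) ((m : ℤ) - (j : ℤ)))

/-- The singular vector `ξ_s^{l,m}` for `0 ≤ κ ≤ n-2`. -/
def xiA2 (q : ℂ) {L : Type} [Field L] (ι : ℂ →+* L) {n : ℕ} (ε : Fin n → Bool)
    (l m s : ℕ) : WW L ε :=
  ∑ j ∈ Finset.range (s + 1),
    ι ((-1 : ℂ) ^ j * q ^ ((j : ℤ) * (2 * (s : ℤ) - (m : ℤ) - (j : ℤ) - 1) + (m : ℤ) * (s : ℤ)) *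
        qbin q s j) •
      kk L ε
        (fun u => if (u : ℕ) < n - 2 then 0
          else if (u : ℕ) = n - 2 then (j : ℤ) else (l : ℤ) - (j : ℤ))
        (fun u => if (u : ℕ) < n - 2 then 0
          else if (u : ℕ) = n - 2 then (s : ℤ) - (j : ℤ) else (m : ℤ) - (s : ℤ) + (j : ℤ))

/-- The type B singular vector `ξ_l`. -/
def xiB (q pc : ℂ) {L : Type} [Field L] (ι : ℂ →+* L) {n : ℕ} (ε : Fin n → Bool)
    (l : ℕ) : WW L ε :=
  ∑ m ∈ Finset.range (l + 1),
    ι ((-pc) ^ (-(m : ℤ)) * q ^ ((m : ℤ) * (l : ℤ) - ((m * (m + 1) / 2 : ℕ) : ℤ)) *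
        qbin q l m) •
      kk L ε (fun u => if (u : ℕ) = n - 1 then (m : ℤ) else 0)
        (fun u => if (u : ℕ) = n - 1 then (l : ℤ) - (m : ℤ) else 0)

/-! ## Miscellany -/

/-- Apply a list of operators, the rightmost element of the list acting first. -/
def appList {L : Type} [Field L] {n : ℕ} {ε : Fin n → Bool}
    (ops : List (WW L ε →ₗ[L] WW L ε)) (v : WW L ε) : WW L ε :=
  ops.foldr (fun A w => A w) v

/-- A natural number as an element of `Fin n`. -/
def mfin {n : ℕ} [NeZero n] (p : ℕ) : Fin n :=
  ⟨p % n, Nat.mod_lt p (Nat.pos_of_ne_zero (NeZero.ne n))⟩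

/-- Reference weight-`l` occupation vector: `(0^{n-l},1^l)` if `κ = n`, `l·e_n` otherwise. -/
def refAN (n κ l : ℕ) : Fin n → ℕ := fun t =>
  if κ = n then (if n - l ≤ (t : ℕ) then 1 else 0) else (if (t : ℕ) = n - 1 then l else 0)

/-- The flip `P(u⊗v) = v⊗u` on `𝒲⊗𝒲`. -/
def Pop (L : Type) [Field L] {n : ℕ} (ε : Fin n → Bool) : WW L ε →ₗ[L] WW L ε :=
  mkEnd L fun p => Finsupp.single (p.2, p.1) 1

/-! ### Kets and local oscillators -/

section Oscillators

variable {L : Type} [Field L] {n : ℕ} {ε : Fin n → Bool}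

theorem mkEnd_single {α : Type} (v : α → (α →₀ L)) (m : α) (c : L) :
    mkEnd L v (Finsupp.single m c) = c • v m := by
  simp [mkEnd]

theorem W_ext {A B : W L ε →ₗ[L] W L ε}
    (h : ∀ m, A (Finsupp.single m 1) = B (Finsupp.single m 1)) : A = B := by
  refine Finsupp.lhom_ext fun m c => ?_
  rw [← mul_one c, ← smul_eq_mul, ← Finsupp.smul_single, map_smul, map_smul, h]

theorem ket_coe (m : Idx ε) : ket L ε (fun t => (m.1 t : ℤ)) = Finsupp.single m 1 := by
  have h : (∀ t, 0 ≤ (m.1 t : ℤ)) ∧ Ok ε (fun t => ((m.1 t : ℤ)).toNat) :=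
    ⟨fun t => by positivity, by simpa using m.2⟩
  rw [ket, dif_pos h]
  rfl

theorem ket_eq_zero_of_neg {m : Fin n → ℤ} (t : Fin n) (h : m t < 0) : ket L ε m = 0 := by
  rw [ket, dif_neg]
  exact fun h' => absurd (h'.1 t) (by omega)

theorem ket_eq_zero_of_gt {m : Fin n → ℤ} (t : Fin n) (ht : ε t = true) (h : 1 < m t) :
    ket L ε m = 0 := by
  rw [ket, dif_neg]
  intro h'
  have := h'.2 t ht
  simp only at this
  omega

/-- A ket is either a basis vector or out of range at some coordinate. -/
theorem ket_cases (m : Fin n → ℤ) :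
    (∃ m' : Idx ε, m = fun t => (m'.1 t : ℤ)) ∨ (∃ t, m t < 0) ∨
      ∃ t, ε t = true ∧ 1 < m t := by
  by_cases h0 : ∃ t, m t < 0
  · exact Or.inr (Or.inl h0)
  by_cases h1 : ∃ t, ε t = true ∧ 1 < m t
  · exact Or.inr (Or.inr h1)
  push Not at h0 h1
  refine Or.inl ⟨⟨fun t => (m t).toNat, fun t ht => ?_⟩, ?_⟩
  · have := h1 t ht
    simp only
    omega
  · funext t
    have := h0 t
    simp only
    omega

theorem av_coe (m : Fin n → ℕ) (t : Fin n) : av m (t : ℕ) = m t := by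
  simp [av]

theorem dlt_self (t : Fin n) : dlt (t : ℕ) t = 1 := by simp [dlt]

theorem dlt_ne {p : ℕ} {t : Fin n} (h : (t : ℕ) ≠ p) : dlt p t = 0 := by simp [dlt, h]

/-- The creation operator `a⁺_p : |m⟩ ↦ |m + e_p⟩` at (0-based) position `p`. -/
def up (L : Type) [Field L] {n : ℕ} (ε : Fin n → Bool) (p : ℕ) : Module.End L (W L ε) :=
  mkEnd L fun m => ket L ε fun t => (m.1 t : ℤ) + dlt p t

/-- The annihilation operator `a⁻_p : |m⟩ ↦ [m_p] |m - e_p⟩` at (0-based) position `p`. -/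
def dn (q : ℂ) {L : Type} [Field L] (ι : ℂ →+* L) {n : ℕ} (ε : Fin n → Bool) (p : ℕ) :
    Module.End L (W L ε) :=
  mkEnd L fun m => ι (qnum q (av m.1 p)) • ket L ε fun t => (m.1 t : ℤ) - dlt p t

/-- Raising a ket at `p` is the expected shift as soon as its `p`-th entry is nonnegative:
the other entries stay out of range if they were. -/
theorem up_ket (p : ℕ) (m : Fin n → ℤ) (h : ∀ t : Fin n, (t : ℕ) = p → 0 ≤ m t) :
    up L ε p (ket L ε m) = ket L ε fun t => m t + dlt p t := by
  rcases ket_cases (ε := ε) m with ⟨m', rfl⟩ | ⟨t, ht⟩ | ⟨t, ht, ht'⟩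
  · rw [ket_coe, up, mkEnd_single, one_smul]
  · have htp : (t : ℕ) ≠ p := fun e => absurd (h t e) (by omega)
    rw [ket_eq_zero_of_neg t ht, map_zero, ket_eq_zero_of_neg t]
    simpa [dlt_ne htp] using ht
  · rw [ket_eq_zero_of_gt t ht ht', map_zero, ket_eq_zero_of_gt t ht]
    have : 0 ≤ dlt p t := by simp only [dlt]; split_ifs <;> simp
    omega

theorem qnum_zero (q : ℂ) : qnum q 0 = 0 := by simp [qnum]

/-- Lowering a ket at `p` is the expected shift as soon as its `p`-th entry obeys the
exclusion bound. -/
theorem dn_ket (q : ℂ) (ι : ℂ →+* L) (p : ℕ) (m : Fin n → ℤ)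
    (h : ∀ t : Fin n, (t : ℕ) = p → ε t = true → m t ≤ 1) :
    dn q ι ε p (ket L ε m) =
      ι (qnum q (av (fun t => (m t).toNat) p)) • ket L ε fun t => m t - dlt p t := by
  rcases ket_cases (ε := ε) m with ⟨m', rfl⟩ | ⟨t, ht⟩ | ⟨t, ht, ht'⟩
  · rw [ket_coe, dn, mkEnd_single, one_smul]
    simp
  · rw [ket_eq_zero_of_neg t ht, map_zero, ket_eq_zero_of_neg t, smul_zero]
    have : 0 ≤ dlt p t := by simp only [dlt]; split_ifs <;> simp
    omega
  · have htp : (t : ℕ) ≠ p := fun e => absurd (h t e ht) (by omega)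
    rw [ket_eq_zero_of_gt t ht ht', map_zero, ket_eq_zero_of_gt t ht, smul_zero]
    simpa [dlt_ne htp] using ht'

theorem up_single (p : ℕ) (m : Idx ε) :
    up L ε p (Finsupp.single m 1) = ket L ε fun t => (m.1 t : ℤ) + dlt p t := by
  rw [up, mkEnd_single, one_smul]

theorem dn_single (q : ℂ) (ι : ℂ →+* L) (p : ℕ) (m : Idx ε) :
    dn q ι ε p (Finsupp.single m 1) =
      ι (qnum q (av m.1 p)) • ket L ε fun t => (m.1 t : ℤ) - dlt p t := by
  rw [dn, mkEnd_single, one_smul]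

theorem up_up (p p' : ℕ) : Commute (up L ε p) (up L ε p') := by
  refine W_ext fun m => ?_
  have key : ∀ a b : ℕ, (up L ε a * up L ε b) (Finsupp.single m 1) =
      ket L ε fun t => (m.1 t : ℤ) + dlt b t + dlt a t := fun a b => by
    rw [Module.End.mul_apply, up_single, up_ket]
    intro t _
    have : 0 ≤ dlt b t := by simp only [dlt]; split_ifs <;> simp
    omega
  rw [key, key]
  congr 1
  funext t
  ring

theorem dn_dn (q : ℂ) (ι : ℂ →+* L) (p p' : ℕ) : Commute (dn q ι ε p) (dn q ι ε p') := by
  rcases eq_or_ne p p' with rfl | hne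
  · exact Commute.refl _
  refine W_ext fun m => ?_
  have key : ∀ a b : ℕ, a ≠ b → (dn q ι ε a * dn q ι ε b) (Finsupp.single m 1) =
      (ι (qnum q (av m.1 b)) * ι (qnum q (av m.1 a))) •
        ket L ε fun t => (m.1 t : ℤ) - dlt b t - dlt a t := fun a b hab => by
    rw [Module.End.mul_apply, dn_single, map_smul, dn_ket, smul_smul]
    · congr 3
      unfold av
      split_ifs with h
      · simp [dlt, hab]
      · rfl
    · intro t ht hε
      rw [dlt_ne (by omega)]
      have := m.2 t hε
      omega
  rw [key _ _ hne, key _ _ hne.symm, mul_comm]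
  congr 2
  funext t
  ring

theorem up_dn (q : ℂ) (ι : ℂ →+* L) {p p' : ℕ} (hne : p ≠ p') :
    Commute (up L ε p) (dn q ι ε p') := by
  refine W_ext fun m => ?_
  rw [Module.End.mul_apply, Module.End.mul_apply, dn_single, up_single, map_smul, up_ket, dn_ket]
  · congr 3
    · unfold av
      split_ifs with h
      · simp [dlt, hne.symm]
      · rfl
    · funext t
      ring
  · intro t ht hε
    rw [dlt_ne (by omega)]
    have := m.2 t hε
    omega
  · intro t ht
    rw [dlt_ne (by omega)]
    omega

/-- The eigenvalue `q_p^{m_p}` of the diagonal operator `t_p` on `|m⟩`. -/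
def tv (q : ℂ) {n : ℕ} (ε : Fin n → Bool) (m : Idx ε) (p : ℕ) : ℂ := qc q ε p ^ (av m.1 p : ℤ)

theorem qc_ne_zero {q : ℂ} (hq0 : q ≠ 0) (p : ℕ) : qc q ε p ≠ 0 := by
  unfold qc
  split_ifs <;> simp [hq0]

theorem tv_ne_zero {q : ℂ} (hq0 : q ≠ 0) (m : Idx ε) (p : ℕ) : tv q ε m p ≠ 0 :=
  zpow_ne_zero _ (qc_ne_zero hq0 p)

/-- `[m_p] = (t_p - t_p⁻¹)/(q - q⁻¹)`, for both statistics. -/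
theorem qnum_av (q : ℂ) (m : Idx ε) (t : Fin n) :
    qnum q (m.1 t) = (tv q ε m t - (tv q ε m t)⁻¹) / (q - q⁻¹) := by
  rw [tv, av_coe, qc, dif_pos t.2]
  cases hε : ε t
  · simp [qnum]
  · have h1 := m.2 t hε
    interval_cases h : m.1 t <;> simp [qnum]
    ring

/-- `a⁺a⁻ = (t - t⁻¹)/(q - q⁻¹)`. -/
theorem up_dn_self (q : ℂ) (ι : ℂ →+* L) (t : Fin n) (m : Idx ε) :
    up L ε t (dn q ι ε t (Finsupp.single m 1)) =
      ι ((tv q ε m t - (tv q ε m t)⁻¹) / (q - q⁻¹)) • Finsupp.single m 1 := by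
  rw [← qnum_av, dn_single, av_coe, map_smul]
  by_cases h : m.1 t = 0
  · simp [h, qnum_zero]
  · rw [up_ket, ← ket_coe]
    · simp
    · intro t' ht'
      obtain rfl := Fin.ext ht'
      rw [dlt_self]
      omega

/-- `a⁻a⁺ = (q t - q⁻¹ t⁻¹)/(q - q⁻¹)`. -/
theorem dn_up_self {q : ℂ} (hq0 : q ≠ 0) (ι : ℂ →+* L) (t : Fin n) (m : Idx ε) :
    dn q ι ε t (up L ε t (Finsupp.single m 1)) =
      ι ((q * tv q ε m t - q⁻¹ * (tv q ε m t)⁻¹) / (q - q⁻¹)) • Finsupp.single m 1 := by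
  rw [up_single]
  have hbd : (ε t = true → m.1 t = 0) →
      dn q ι ε t (ket L ε fun s => (m.1 s : ℤ) + dlt (t : ℕ) s) =
        ι (qnum q (m.1 t + 1)) • Finsupp.single m 1 := fun h => by
    rw [dn_ket, ← ket_coe, av_coe, dlt_self]
    · congr 3
      · simp
    · intro t' ht' hε
      obtain rfl := Fin.ext ht'
      rw [dlt_self]
      have := h hε
      omega
  cases hε : ε t
  · rw [hbd (by simp [hε])]
    congr 2
    rw [tv, av_coe, qc, dif_pos t.2]
    simp only [hε, qnum, Bool.false_eq_true, if_false, zpow_natCast, Fin.eta, inv_pow]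
    rw [pow_succ, mul_inv, mul_comm q, mul_comm q⁻¹]
  · have h1 := m.2 t hε
    rcases Nat.lt_or_ge (m.1 t) 1 with h | h
    · have h0 : m.1 t = 0 := by omega
      rw [hbd fun _ => h0]
      congr 2
      simp [tv, av_coe, h0, qnum]
    · -- Exclusion: the intermediate ket has a doubly occupied fermionic position.
      have h0 : m.1 t = 1 := by omega
      rw [ket_eq_zero_of_gt t hε, map_zero]
      · have : tv q ε m t = -q⁻¹ := by
          simp [tv, av_coe, h0, qc, hε]
        rw [this]
        simp [hq0]
      · rw [dlt_self]
        omega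

end Oscillators

/-! ### The generators in terms of oscillators -/

section Generators

variable {L : Type} [Field L] {n : ℕ} {ε : Fin n → Bool}

/-- The factor of `e_r` acting at position `r - 1`: `a⁻_{r-1}`, or the scalar `x` when `r = 0`. -/
def dnL (q : ℂ) {L : Type} [Field L] (ι : ℂ →+* L) {n : ℕ} (ε : Fin n → Bool) (x : L)
    (r : ℕ) : Module.End L (W L ε) := if r = 0 then x • 1 else dn q ι ε (r - 1)

/-- The factor of `f_r` acting at position `r - 1`: `a⁺_{r-1}`, or the scalar `x⁻¹` when `r = 0`. -/
def upL {L : Type} [Field L] {n : ℕ} (ε : Fin n → Bool) (x : L) (r : ℕ) :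
    Module.End L (W L ε) := if r = 0 then x⁻¹ • 1 else up L ε (r - 1)

/-- The factor of `e_r` acting at position `r`: `a⁺_r`, or `1` when `r = n`. -/
def upR (L : Type) [Field L] {n : ℕ} (ε : Fin n → Bool) (r : ℕ) :
    Module.End L (W L ε) := if r = n then 1 else up L ε r

/-- The factor of `f_r` acting at position `r`: `a⁻_r`, or `1` when `r = n`. -/
def dnR (q : ℂ) {L : Type} [Field L] (ι : ℂ →+* L) {n : ℕ} (ε : Fin n → Bool) (r : ℕ) :
    Module.End L (W L ε) := if r = n then 1 else dn q ι ε r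

theorem eB_eq [NeZero n] (q : ℂ) (ι : ℂ →+* L) (x : L) (r : Fin (n + 1)) :
    eB q ι ε x r = upR L ε r * dnL q ι ε x r := by
  have hn := NeZero.ne n
  refine W_ext fun m => ?_
  rw [eB, mkEnd_single, one_smul, Module.End.mul_apply]
  by_cases h0 : (r : ℕ) = 0
  · have h1 : (0 : ℕ) ≠ n := by omega
    simp only [upR, dnL, h0, h1, if_true, if_false, LinearMap.smul_apply, Module.End.one_apply,
      map_smul, up_single]
  by_cases h1 : (r : ℕ) = n
  · simp [upR, dnL, h1, hn, dn_single]
  · simp only [upR, dnL, h0, h1, if_false]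
    rw [dn_single, map_smul, up_ket]
    intro t ht
    rw [dlt_ne (by omega)]
    omega

theorem fB_eq [NeZero n] (q : ℂ) (ι : ℂ →+* L) (x : L) (r : Fin (n + 1)) :
    fB q ι ε x r = upL ε x r * dnR q ι ε r := by
  have hn := NeZero.ne n
  refine W_ext fun m => ?_
  rw [fB, mkEnd_single, one_smul, Module.End.mul_apply]
  by_cases h0 : (r : ℕ) = 0
  · have h1 : (0 : ℕ) ≠ n := by omega
    simp only [upL, dnR, h0, h1, if_true, if_false, LinearMap.smul_apply, Module.End.one_apply,
      dn_single, mul_smul]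
  by_cases h1 : (r : ℕ) = n
  · simp [upL, dnR, h1, hn, up_single]
  · simp only [upL, dnR, h0, h1, if_false]
    rw [dn_single, map_smul, up_ket]
    · congr 2
      funext t
      ring
    intro t ht
    rw [dlt_ne (by omega)]
    omega

theorem e_f_commute [NeZero n] (q : ℂ) (ι : ℂ →+* L) (x : L) {i j : Fin (n + 1)} (h : i ≠ j) :
    Commute (eB q ι ε x i : Module.End L (W L ε)) (fB q ι ε x j) := by
  have h' : (i : ℕ) ≠ j := fun e => h (Fin.ext e)
  rw [eB_eq, fB_eq]
  refine Commute.mul_left (Commute.mul_right ?_ ?_) (Commute.mul_right ?_ ?_)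
  · unfold upR upL
    split_ifs
    · exact Commute.one_left _
    · exact Commute.one_left _
    · exact (Commute.one_right _).smul_right _
    · exact up_up _ _
  · unfold upR dnR
    split_ifs
    · exact Commute.one_left _
    · exact Commute.one_left _
    · exact Commute.one_right _
    · exact up_dn q ι h'
  · unfold dnL upL
    split_ifs
    · exact ((Commute.one_right _).smul_right _)
    · exact ((Commute.one_left _).smul_left _)
    · exact ((Commute.one_right _).smul_right _)
    · exact (up_dn q ι (by omega)).symm
  · unfold dnL dnR
    split_ifs
    · exact Commute.one_right _
    · exact ((Commute.one_left _).smul_left _)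
    · exact Commute.one_right _
    · exact dn_dn q ι _ _

theorem q_sub_inv_ne_zero {q : ℂ} (hq0 : q ≠ 0) (hq : ∀ k : ℕ, k ≠ 0 → q ^ k ≠ 1) :
    q - q⁻¹ ≠ 0 := by
  intro h
  refine hq 2 two_ne_zero ?_
  field_simp at h
  linear_combination h

theorem p_sub_inv_ne_zero {q pc : ℂ} (hq0 : q ≠ 0) (hq : ∀ k : ℕ, k ≠ 0 → q ^ k ≠ 1)
    (hpc : pc ^ 2 = -q⁻¹) : pc - pc⁻¹ ≠ 0 := by
  have hp0 : pc ≠ 0 := by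
    rintro rfl
    simp [hq0] at hpc
  intro h
  refine hq 2 two_ne_zero ?_
  field_simp at h hpc
  have : pc ^ 2 = 1 := by linear_combination h
  rw [this] at hpc
  have : q = -1 := by linear_combination hpc
  rw [this]; norm_num

theorem kB_single (q pc : ℂ) (ι : ℂ →+* L) (s : ℤ) (r : Fin (n + 1)) (m : Idx ε) :
    kB q pc ι ε s r (Finsupp.single m 1) =
      ι ((if (r : ℕ) = 0 then pc⁻¹ * tv q ε m 0
        else if (r : ℕ) = n then pc * (tv q ε m (n - 1))⁻¹
        else (tv q ε m ((r : ℕ) - 1))⁻¹ * tv q ε m (r : ℕ)) ^ s) • Finsupp.single m 1 := by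
  rw [kB, mkEnd_single, one_smul]
  simp only [tv, zpow_neg]

/-- The scalar identity behind `[e_0, f_0]` and, up to sign, `[e_n, f_n]`: this is where
`p² = -q⁻¹` enters. -/
theorem boundary_scalar {q pc : ℂ} (hq0 : q ≠ 0) (hq : ∀ k : ℕ, k ≠ 0 → q ^ k ≠ 1)
    (hpc : pc ^ 2 = -q⁻¹) {t : ℂ} (ht : t ≠ 0) :
    (t - t⁻¹) / (q - q⁻¹) - (q * t - q⁻¹ * t⁻¹) / (q - q⁻¹) =
      (pc - pc⁻¹)⁻¹ * (pc⁻¹ * t - pc * t⁻¹) := by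
  have hd := q_sub_inv_ne_zero hq0 hq
  have hdp := p_sub_inv_ne_zero hq0 hq hpc
  have hp0 : pc ≠ 0 := by
    rintro rfl
    simp [hq0] at hpc
  have hq1 : q = -(pc ^ 2)⁻¹ := by rw [hpc]; simp
  rw [div_sub_div_same, div_eq_iff hd, mul_assoc, eq_inv_mul_iff_mul_eq₀ hdp, hq1]
  field_simp
  ring

theorem e_f_self [NeZero n] {q pc : ℂ} (hq0 : q ≠ 0) (hq : ∀ k : ℕ, k ≠ 0 → q ^ k ≠ 1)
    (hpc : pc ^ 2 = -q⁻¹) (ι : ℂ →+* L) {x : L} (hx : x ≠ 0) (i : Fin (n + 1)) :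
    eB q ι ε x i ∘ₗ fB q ι ε x i - fB q ι ε x i ∘ₗ eB q ι ε x i =
      (ι ((if (i : ℕ) = 0 ∨ (i : ℕ) = n then pc else q) -
          (if (i : ℕ) = 0 ∨ (i : ℕ) = n then pc else q)⁻¹))⁻¹ •
        (kB q pc ι ε 1 i - kB q pc ι ε (-1) i) := by
  have hn := NeZero.ne n
  have hd := q_sub_inv_ne_zero hq0 hq
  refine W_ext fun m => ?_
  rw [eB_eq, fB_eq]
  simp only [LinearMap.sub_apply, LinearMap.comp_apply, LinearMap.smul_apply, kB_single,
    ← map_inv₀, Module.End.mul_apply]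
  by_cases h0 : (i : ℕ) = 0
  · have h1 : (0 : ℕ) ≠ n := by omega
    have ht := tv_ne_zero hq0 m 0
    have e1 := up_dn_self q ι (0 : Fin n) m
    have e2 := dn_up_self hq0 ι (0 : Fin n) m
    rw [Fin.val_zero] at e1 e2
    simp only [upR, dnL, upL, dnR, h0, h1, if_true, if_false, true_or, LinearMap.smul_apply,
      Module.End.one_apply, map_smul, e1, e2, inv_smul_smul₀ hx, smul_smul, ← sub_smul, ← map_sub,
      ← map_mul]
    rw [mul_right_comm, mul_inv_cancel₀ hx, one_mul, ← map_sub, boundary_scalar hq0 hq hpc ht, zpow_one, zpow_neg_one, mul_inv, inv_inv]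
  by_cases h1 : (i : ℕ) = n
  · have ht := tv_ne_zero hq0 m (n - 1)
    have e1 := up_dn_self q ι (⟨n - 1, by omega⟩ : Fin n) m
    have e2 := dn_up_self hq0 ι (⟨n - 1, by omega⟩ : Fin n) m
    simp only at e1 e2
    simp only [upR, dnL, upL, dnR, h1, hn, if_true, if_false, or_true,
      Module.End.one_apply, e1, e2, smul_smul, ← sub_smul, ← map_sub, ← map_mul]
    rw [← neg_sub, boundary_scalar hq0 hq hpc ht, zpow_one, zpow_neg_one, mul_inv, inv_inv,
      ← mul_neg, neg_sub]
  · have ha := tv_ne_zero hq0 m (i - 1)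
    have hb := tv_ne_zero hq0 m i
    have e1 := up_dn_self q ι (⟨i - 1, by omega⟩ : Fin n) m
    have e2 := dn_up_self hq0 ι (⟨i - 1, by omega⟩ : Fin n) m
    have e3 := up_dn_self q ι (⟨i, by omega⟩ : Fin n) m
    have e4 := dn_up_self hq0 ι (⟨i, by omega⟩ : Fin n) m
    simp only at e1 e2 e3 e4
    have hne : (i : ℕ) ≠ i - 1 := by omega
    -- Bring the two factors at each position next to each other.
    have c1 : up L ε i * dn q ι ε (i - 1) * (up L ε (i - 1) * dn q ι ε i) =
        dn q ι ε (i - 1) * up L ε (i - 1) * (up L ε i * dn q ι ε i) := by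
      rw [(up_dn q ι hne).eq, mul_assoc, ← mul_assoc (up L ε i),
        (up_up (i : ℕ) (i - 1)).eq]
      simp only [mul_assoc]
    have c2 : up L ε (i - 1) * dn q ι ε i * (up L ε i * dn q ι ε (i - 1)) =
        up L ε (i - 1) * dn q ι ε (i - 1) * (dn q ι ε i * up L ε i) := by
      rw [(up_dn q ι hne).eq, mul_assoc, ← mul_assoc (dn q ι ε i),
        (dn_dn q ι (i : ℕ) (i - 1)).eq]
      simp only [mul_assoc]
    have c1' := LinearMap.congr_fun c1 (Finsupp.single m 1)
    have c2' := LinearMap.congr_fun c2 (Finsupp.single m 1)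
    simp only [Module.End.mul_apply] at c1' c2'
    simp only [upR, dnL, upL, dnR, h0, h1, if_false, or_self, c1', c2', map_smul, e1, e2, e3, e4,
      smul_smul, ← sub_smul, ← map_sub, ← map_mul]
    congr 2
    rw [zpow_one, zpow_neg_one]
    generalize tv q ε m (i - 1) = a at *
    generalize tv q ε m i = b at *
    rw [div_mul_div_comm, div_mul_div_comm, div_sub_div_same, div_eq_iff (mul_ne_zero hd hd),
      mul_assoc, eq_inv_mul_iff_mul_eq₀ hd, mul_inv, inv_inv]
    ring

end Generators

/-! ### Weights and the Cartan relations -/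

section Weights

variable {L : Type} [Field L] {n : ℕ} {ε : Fin n → Bool}

/-- The coefficient at position `p` of the shift vector `e_r - e_{r-1}` by which the `r`-th
raising generator moves occupation vectors (0-based positions; at the two end nodes only the
entry inside `{0, …, n-1}` matters). -/
def eta (r p : ℕ) : ℤ := (if p = r then 1 else 0) - if p + 1 = r then 1 else 0

theorem eB_single [NeZero n] (q : ℂ) (ι : ℂ →+* L) (x : L) (r : Fin (n + 1)) (m : Idx ε) :
    eB q ι ε x r (Finsupp.single m 1) =
      (if (r : ℕ) = 0 then x else ι (qnum q (av m.1 (r - 1)))) •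
        ket L ε fun t => (m.1 t : ℤ) + eta r t := by
  have hn := NeZero.ne n
  rw [eB, mkEnd_single, one_smul]
  by_cases h0 : (r : ℕ) = 0
  · simp [h0, dlt, eta]
  by_cases h1 : (r : ℕ) = n
  · simp only [h1, hn, if_true, if_false]
    congr 2
    funext t
    have : (t : ℕ) < n := t.2
    simp only [dlt, eta]
    split_ifs <;> omega
  · simp only [h0, h1, if_false]
    congr 2
    funext t
    simp only [dlt, eta]
    split_ifs <;> omega

theorem fB_single [NeZero n] (q : ℂ) (ι : ℂ →+* L) (x : L) (r : Fin (n + 1)) (m : Idx ε) :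
    fB q ι ε x r (Finsupp.single m 1) =
      (if (r : ℕ) = 0 then x⁻¹ * ι (qnum q (av m.1 0)) else
        if (r : ℕ) = n then 1 else ι (qnum q (av m.1 r))) •
        ket L ε fun t => (m.1 t : ℤ) - eta r t := by
  have hn := NeZero.ne n
  rw [fB, mkEnd_single, one_smul]
  by_cases h0 : (r : ℕ) = 0
  · simp [h0, dlt, eta]
  by_cases h1 : (r : ℕ) = n
  · simp only [h1, hn, if_true, if_false, one_smul]
    congr 1
    funext t
    have : (t : ℕ) < n := t.2
    simp only [dlt, eta]
    split_ifs <;> omega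
  · simp only [h0, h1, if_false]
    congr 2
    funext t
    simp only [dlt, eta]
    split_ifs <;> omega

/-- The eigenvalue of `k_r` on `|m⟩`, as a product over positions; it makes sense for every
integer vector `m`, in range or not. -/
def wt (q pc : ℂ) {n : ℕ} (ε : Fin n → Bool) (r : ℕ) (m : Fin n → ℤ) : ℂ :=
  (if r = 0 then pc⁻¹ else if r = n then pc else 1) * ∏ t : Fin n, qc q ε t ^ (eta r t * m t)

theorem prod_dlt (q : ℂ) (m : Idx ε) (p : ℕ) :
    ∏ t : Fin n, qc q ε t ^ ((if (t : ℕ) = p then (1 : ℤ) else 0) * m.1 t) = tv q ε m p := by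
  by_cases hp : p < n
  · rw [Finset.prod_eq_single ⟨p, hp⟩]
    · simp [tv, av, hp]
    · intro b _ hb
      rw [if_neg fun h => hb (Fin.ext h)]
      simp
    · simp
  · rw [Finset.prod_eq_one]
    · simp [tv, av, hp]
    · intro t _
      rw [if_neg (by omega)]
      simp

theorem wt_coe [NeZero n] {q : ℂ} (hq0 : q ≠ 0) (pc : ℂ) {r : ℕ} (m : Idx ε) :
    wt q pc ε r (fun t => (m.1 t : ℤ)) =
      if r = 0 then pc⁻¹ * tv q ε m 0
        else if r = n then pc * (tv q ε m (n - 1))⁻¹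
        else (tv q ε m (r - 1))⁻¹ * tv q ε m r := by
  have hn := NeZero.ne n
  have h : ∏ t : Fin n, qc q ε t ^ (eta r t * m.1 t) =
      tv q ε m r * (if r = 0 then 1 else tv q ε m (r - 1))⁻¹ := by
    rw [← prod_dlt q m r]
    by_cases h0 : r = 0
    · simp [h0, eta]
    · rw [if_neg h0, ← prod_dlt q m (r - 1), ← Finset.prod_inv_distrib,
        ← Finset.prod_mul_distrib]
      refine Finset.prod_congr rfl fun t _ => ?_
      rw [← zpow_neg, ← zpow_add₀ (qc_ne_zero hq0 _)]
      congr 1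
      have : (t : ℕ) + 1 = r ↔ (t : ℕ) = r - 1 := by omega
      simp only [eta, this]
      ring
  rw [wt, h]
  by_cases h0 : r = 0
  · simp [h0]
  by_cases h1 : r = n
  · have : tv q ε m n = 1 := by simp [tv, av]
    simp [h1, hn, this]
  · simp [h0, h1, mul_comm]

theorem kB_ket [NeZero n] {q : ℂ} (hq0 : q ≠ 0) (pc : ℂ) (ι : ℂ →+* L) (s : ℤ)
    (r : Fin (n + 1)) (m : Fin n → ℤ) :
    kB q pc ι ε s r (ket L ε m) = ι (wt q pc ε r m ^ s) • ket L ε m := by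
  rcases ket_cases (ε := ε) m with ⟨m', rfl⟩ | ⟨t, ht⟩ | ⟨t, ht, ht'⟩
  · rw [wt_coe hq0, ket_coe, kB_single]
  · rw [ket_eq_zero_of_neg t ht, map_zero, smul_zero]
  · rw [ket_eq_zero_of_gt t ht ht', map_zero, smul_zero]

theorem wt_ne_zero {q pc : ℂ} (hq0 : q ≠ 0) (hp0 : pc ≠ 0) (r : ℕ) (m : Fin n → ℤ) :
    wt q pc ε r m ≠ 0 := by
  refine mul_ne_zero ?_ (Finset.prod_ne_zero_iff.2 fun t _ => zpow_ne_zero _ (qc_ne_zero hq0 _))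
  split_ifs <;> simp [hp0]

/-- The structure constants are the multiplicative pairing of the shift vectors. -/
theorem DB_eq [NeZero n] (q : ℂ) (i j : Fin (n + 1)) :
    DB q ε i j = ∏ t : Fin n, qc q ε t ^ (eta i t * eta j t) := by
  have hn := NeZero.ne n
  rw [Fin.prod_univ_eq_prod_range (fun p => qc q ε p ^ (eta i p * eta j p)) n, DB]
  have hi := i.2
  have hj := j.2
  have hmem : ∀ r p : ℕ, r < n + 1 → (p ∈ nodeB n r ↔ p < n ∧ (p = r ∨ p + 1 = r)) := by
    intro r p hr
    unfold nodeB
    split_ifs <;> simp <;> omega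
  have hsub : nodeB n i ∩ nodeB n j ⊆ Finset.range n := fun p hp => by
    rw [Finset.mem_inter, hmem _ _ hi] at hp
    exact Finset.mem_range.2 hp.1.1
  refine Eq.trans ?_ (Finset.prod_subset hsub ?_)
  · refine Finset.prod_congr rfl fun p hp => ?_
    rw [Finset.mem_inter, hmem _ _ hi, hmem _ _ hj] at hp
    congr 1
    simp only [Fin.ext_iff, eta]
    split_ifs <;> omega
  · intro p hp hp'
    rw [Finset.mem_range] at hp
    rw [Finset.mem_inter, hmem _ _ hi, hmem _ _ hj] at hp'
    have : eta i p * eta j p = 0 := by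
      simp only [eta]
      split_ifs <;> omega
    rw [this, zpow_zero]

theorem wt_add [NeZero n] {q : ℂ} (hq0 : q ≠ 0) (pc : ℂ) (i j : Fin (n + 1)) (m : Fin n → ℤ) :
    wt q pc ε i (fun t => m t + eta j t) = DB q ε i j * wt q pc ε i m := by
  rw [wt, wt, DB_eq, mul_left_comm, ← Finset.prod_mul_distrib]
  congr 1
  refine Finset.prod_congr rfl fun t _ => ?_
  rw [← zpow_add₀ (qc_ne_zero hq0 _)]
  congr 1
  ring

theorem DB_ne_zero {q : ℂ} (hq0 : q ≠ 0) (i j : Fin (n + 1)) : DB q ε i j ≠ 0 :=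
  Finset.prod_ne_zero_iff.2 fun _ _ => zpow_ne_zero _ (qc_ne_zero hq0 _)

theorem wt_sub [NeZero n] {q : ℂ} (hq0 : q ≠ 0) (pc : ℂ) (i j : Fin (n + 1)) (m : Fin n → ℤ) :
    wt q pc ε i (fun t => m t - eta j t) = (DB q ε i j)⁻¹ * wt q pc ε i m := by
  rw [eq_inv_mul_iff_mul_eq₀ (DB_ne_zero hq0 i j), ← wt_add hq0]
  simp

theorem k_e [NeZero n] {q : ℂ} (hq0 : q ≠ 0) (pc : ℂ) (ι : ℂ →+* L) (x : L)
    (i j : Fin (n + 1)) :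
    kB q pc ι ε 1 i ∘ₗ eB q ι ε x j = ι (DB q ε i j) • (eB q ι ε x j ∘ₗ kB q pc ι ε 1 i) := by
  refine W_ext fun m => ?_
  rw [LinearMap.smul_apply, LinearMap.comp_apply, LinearMap.comp_apply, kB_single,
    ← wt_coe hq0, map_smul, eB_single, map_smul, kB_ket hq0, wt_add hq0]
  simp only [zpow_one, map_mul, smul_smul]
  congr 1
  ring

theorem k_f [NeZero n] {q : ℂ} (hq0 : q ≠ 0) (pc : ℂ) (ι : ℂ →+* L) (x : L)
    (i j : Fin (n + 1)) :
    kB q pc ι ε 1 i ∘ₗ fB q ι ε x j =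
      (ι (DB q ε i j))⁻¹ • (fB q ι ε x j ∘ₗ kB q pc ι ε 1 i) := by
  refine W_ext fun m => ?_
  rw [LinearMap.smul_apply, LinearMap.comp_apply, LinearMap.comp_apply, kB_single,
    ← wt_coe hq0, map_smul, fB_single, map_smul, kB_ket hq0, wt_sub hq0]
  simp only [zpow_one, map_mul, map_inv₀, smul_smul]
  congr 1
  ring

theorem k_k [NeZero n] {q : ℂ} (hq0 : q ≠ 0) (pc : ℂ) (ι : ℂ →+* L) (s s' : ℤ)
    (i j : Fin (n + 1)) :
    kB q pc ι ε s i ∘ₗ kB q pc ι ε s' j = kB q pc ι ε s' j ∘ₗ kB q pc ι ε s i := by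
  refine W_ext fun m => ?_
  rw [LinearMap.comp_apply, LinearMap.comp_apply, ← ket_coe, kB_ket hq0, kB_ket hq0, map_smul,
    map_smul, kB_ket hq0, kB_ket hq0, smul_comm]

theorem k_k_neg [NeZero n] {q pc : ℂ} (hq0 : q ≠ 0) (hp0 : pc ≠ 0) (ι : ℂ →+* L) (s : ℤ)
    (i : Fin (n + 1)) :
    kB q pc ι ε s i ∘ₗ kB q pc ι ε (-s) i = LinearMap.id := by
  refine W_ext fun m => ?_
  rw [LinearMap.comp_apply, ← ket_coe, kB_ket hq0, map_smul, kB_ket hq0, smul_smul, ← map_mul,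
    ← zpow_add₀ (wt_ne_zero hq0 hp0 _ _)]
  simp

end Weights

/-! ### Irreducibility -/

section Irreducible

variable {L : Type} [Field L] {n : ℕ} {ε : Fin n → Bool}

theorem q_pow_inj {q : ℂ} (hq0 : q ≠ 0) (hq : ∀ k : ℕ, k ≠ 0 → q ^ k ≠ 1) {a b : ℕ}
    (h : q ^ a = q ^ b) : a = b := by
  wlog hab : a ≤ b generalizing a b
  · exact (this h.symm (by omega)).symm
  obtain ⟨c, rfl⟩ := Nat.exists_eq_add_of_le hab
  by_contra hne
  refine hq c (by omega) ?_
  rw [pow_add] at h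
  exact (mul_eq_left₀ (pow_ne_zero _ hq0)).1 h.symm

theorem qnum_ne_zero {q : ℂ} (hq0 : q ≠ 0) (hq : ∀ k : ℕ, k ≠ 0 → q ^ k ≠ 1) {k : ℕ}
    (hk : k ≠ 0) : qnum q k ≠ 0 := by
  refine div_ne_zero ?_ (q_sub_inv_ne_zero hq0 hq)
  rw [sub_ne_zero, inv_pow]
  intro h
  refine hq (2 * k) (by omega) ?_
  rw [two_mul, pow_add]
  nth_rewrite 1 [h]
  exact inv_mul_cancel₀ (pow_ne_zero _ hq0)

theorem tv_inj {q : ℂ} (hq0 : q ≠ 0) (hq : ∀ k : ℕ, k ≠ 0 → q ^ k ≠ 1) {m m' : Idx ε}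
    (t : Fin n) (h : tv q ε m t = tv q ε m' t) : m.1 t = m'.1 t := by
  rw [tv, tv, av_coe, av_coe, qc, dif_pos t.2, zpow_natCast, zpow_natCast] at h
  cases hε : ε t
  · simp only [hε, Fin.eta, Bool.false_eq_true, if_false] at h
    exact q_pow_inj hq0 hq h
  · simp only [hε, Fin.eta, if_true] at h
    have h1 := m.2 t hε
    have h2 := m'.2 t hε
    have hne : -q⁻¹ ≠ 1 := by
      intro h
      refine hq 2 two_ne_zero ?_
      have : q = -1 := by
        rw [← inv_inv q, ← neg_neg q⁻¹, h]
        norm_num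
      rw [this]
      norm_num
    interval_cases m.1 t <;> interval_cases m'.1 t <;> simp_all

/-- The `k_r` have simple joint spectrum: `k_0` reads off `m_1`, and once the earlier entries
are known, each next `k_r` reads off one more. -/
theorem wt_separates [NeZero n] {q pc : ℂ} (hq0 : q ≠ 0) (hp0 : pc ≠ 0)
    (hq : ∀ k : ℕ, k ≠ 0 → q ^ k ≠ 1) {m m' : Idx ε}
    (h : ∀ r : Fin (n + 1),
      wt q pc ε r (fun t => (m.1 t : ℤ)) = wt q pc ε r (fun t => (m'.1 t : ℤ))) :
    m = m' := by
  have key : ∀ p : ℕ, p < n → tv q ε m p = tv q ε m' p := by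
    intro p
    induction p with
    | zero =>
      intro hp
      have := h ⟨0, by omega⟩
      rw [wt_coe hq0, wt_coe hq0] at this
      simpa [hp0] using this
    | succ p ih =>
      intro hp
      have := h ⟨p + 1, by omega⟩
      have h1 : p + 1 ≠ n := by omega
      rw [wt_coe hq0, wt_coe hq0] at this
      simp only [Nat.add_eq_zero_iff, one_ne_zero, and_false, if_false, h1,
        Nat.add_sub_cancel, ih (by omega)] at this
      exact mul_left_cancel₀ (inv_ne_zero (tv_ne_zero hq0 m' p)) this
  exact Subtype.ext (funext fun t => tv_inj hq0 hq t (key t t.2))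

theorem kB_apply [NeZero n] {q : ℂ} (hq0 : q ≠ 0) (pc : ℂ) (ι : ℂ →+* L) (r : Fin (n + 1))
    (v : W L ε) (m : Idx ε) :
    kB q pc ι ε 1 r v m = ι (wt q pc ε r fun t => (m.1 t : ℤ)) * v m := by
  classical
  induction v using Finsupp.induction_linear with
  | zero => simp
  | add f g hf hg => rw [map_add, Finsupp.add_apply, Finsupp.add_apply, hf, hg, mul_add]
  | single m' c =>
    rw [← mul_one c, ← smul_eq_mul, ← Finsupp.smul_single, map_smul, ← ket_coe, kB_ket hq0,
      zpow_one, ket_coe]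
    by_cases hm : m' = m
    · subst hm
      simp [mul_comm]
    · simp [hm]

/-- A nonzero subspace stable under all `k_r` contains a basis vector: the combination
`k_r v - c v` kills one coordinate of `v` and, for a suitable `r`, not another one. -/
theorem exists_single_mem [NeZero n] {q pc : ℂ} (hq0 : q ≠ 0) (hp0 : pc ≠ 0)
    (hq : ∀ k : ℕ, k ≠ 0 → q ^ k ≠ 1) (ι : ℂ →+* L) (U : Submodule L (W L ε))
    (hU : ∀ r : Fin (n + 1), ∀ v ∈ U, kB q pc ι ε 1 r v ∈ U) (v : W L ε) (hv : v ∈ U)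
    (hv0 : v ≠ 0) : ∃ m, Finsupp.single m 1 ∈ U := by
  classical
  induction hN : v.support.card using Nat.strong_induction_on generalizing v with
  | _ N ih =>
    obtain ⟨m, hm⟩ := Finsupp.support_nonempty_iff.2 hv0
    by_cases hm' : ∃ m' ∈ v.support, m' ≠ m
    · obtain ⟨m', hm', hne⟩ := hm'
      obtain ⟨r, hr⟩ : ∃ r : Fin (n + 1),
          wt q pc ε r (fun t => (m'.1 t : ℤ)) ≠ wt q pc ε r (fun t => (m.1 t : ℤ)) := by
        by_contra! hc
        exact hne (wt_separates hq0 hp0 hq hc)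
      set w := kB q pc ι ε 1 r v - ι (wt q pc ε r fun t => (m.1 t : ℤ)) • v with hw
      have hwa : ∀ s, w s = (ι (wt q pc ε r fun t => (s.1 t : ℤ)) -
          ι (wt q pc ε r fun t => (m.1 t : ℤ))) * v s := fun s => by
        rw [hw, Finsupp.sub_apply, kB_apply hq0, Finsupp.smul_apply, smul_eq_mul, sub_mul]
      refine ih _ ?_ w (U.sub_mem (hU r v hv) (U.smul_mem _ hv)) ?_ rfl
      · rw [← hN]
        refine Finset.card_lt_card (Finset.ssubset_iff_of_subset ?_ |>.2 ⟨m, hm, ?_⟩)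
        · intro s hs
          rw [Finsupp.mem_support_iff, hwa] at hs
          exact Finsupp.mem_support_iff.2 (right_ne_zero_of_mul hs)
        · simp [hwa]
      · intro h0
        have h1 := hwa m'
        rw [h0, Finsupp.zero_apply, eq_comm, mul_eq_zero, sub_eq_zero] at h1
        rcases h1 with h1 | h1
        · exact hr (ι.injective h1)
        · exact Finsupp.mem_support_iff.1 hm' h1
    · push Not at hm'
      refine ⟨m, ?_⟩
      have hvm : v = Finsupp.single m (v m) := by
        ext s
        by_cases hs : m = s
        · rw [hs, Finsupp.single_eq_same]
        · rw [Finsupp.single_apply, if_neg hs]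
          by_contra hc
          exact hs (hm' s (Finsupp.mem_support_iff.2 hc)).symm
      have := U.smul_mem (v m)⁻¹ hv
      rw [hvm] at this
      simpa [Finsupp.mem_support_iff.1 hm] using this

/-- The label `m = 0` of the vacuum vector. -/
def vac {n : ℕ} (ε : Fin n → Bool) : Idx ε := ⟨fun _ => 0, fun _ _ => Nat.zero_le _⟩

/-- The potential `∑ (n - t) m_t` (0-based `t`), lowered by one when a particle hops one
position to the right or leaves at the right end. -/
def pot {n : ℕ} (m : Fin n → ℤ) : ℤ := ∑ t : Fin n, ((n : ℤ) - (t : ℕ)) * m t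

theorem pot_nonneg (m : Idx ε) : 0 ≤ pot fun t => (m.1 t : ℤ) := by
  refine Finset.sum_nonneg fun t _ => mul_nonneg ?_ (by positivity)
  have := t.2
  omega

theorem pot_add_eta (m : Fin n → ℤ) {p : ℕ} (hp : p < n) :
    pot (fun t => m t + eta (p + 1) t) = pot m - 1 := by
  have h : ∑ t : Fin n, ((n : ℤ) - (t : ℕ)) * eta (p + 1) t = -1 := by
    rw [Fin.sum_univ_eq_sum_range (fun t => ((n : ℤ) - (t : ℕ)) * eta (p + 1) t) n]
    simp only [eta, mul_sub, Finset.sum_sub_distrib, mul_ite, mul_one, mul_zero,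
      add_left_inj, Finset.sum_ite_eq', Finset.mem_range, hp, if_true]
    split_ifs with h
    · push_cast
      ring
    · have : n = p + 1 := by omega
      rw [this]
      push_cast
      ring
  simp only [pot, mul_add, Finset.sum_add_distrib, h]
  ring

/-- Every basis vector is linked to the vacuum by generators in both directions: the last
occupied position `t` can emit a particle to the right through `e_{t+1}`, which is undone by
`f_{t+1}`, and both matrix elements are nonzero. -/
theorem single_mem_iff_vac [NeZero n] {q : ℂ} (hq0 : q ≠ 0) (hq : ∀ k : ℕ, k ≠ 0 → q ^ k ≠ 1)
    (ι : ℂ →+* L) (x : L) (U : Submodule L (W L ε))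
    (hE : ∀ r : Fin (n + 1), ∀ v ∈ U, eB q ι ε x r v ∈ U)
    (hF : ∀ r : Fin (n + 1), ∀ v ∈ U, fB q ι ε x r v ∈ U) (m : Idx ε) :
    Finsupp.single m 1 ∈ U ↔ Finsupp.single (vac ε) 1 ∈ U := by
  induction hN : (pot fun t => (m.1 t : ℤ)).toNat using Nat.strong_induction_on
    generalizing m with
  | _ N ih =>
    by_cases hm : m = vac ε
    · rw [hm]
    have hne : (Finset.univ.filter fun t => m.1 t ≠ 0).Nonempty := by
      by_contra hc
      rw [Finset.not_nonempty_iff_eq_empty, Finset.filter_eq_empty_iff] at hc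
      exact hm (Subtype.ext (funext fun t => not_not.1 (hc (Finset.mem_univ t))))
    obtain ⟨t, ht, hmax⟩ := Finset.exists_max_image _ (fun t : Fin n => (t : ℕ)) hne
    simp only [Finset.mem_filter, Finset.mem_univ, true_and] at ht hmax
    have hz : ∀ s : Fin n, (t : ℕ) < s → m.1 s = 0 := fun s hs => by
      by_contra hc
      have := hmax s hc
      omega
    obtain ⟨m', hm'⟩ : ∃ m' : Idx ε,
        (fun s => (m.1 s : ℤ) + eta (t + 1) s) = fun s => (m'.1 s : ℤ) := by
      rcases ket_cases (ε := ε) (fun s => (m.1 s : ℤ) + eta (t + 1) s) with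
        h | ⟨s, hs⟩ | ⟨s, hs, hs'⟩
      · exact h
      · exfalso
        by_cases hst : s = t
        · subst hst
          simp [eta] at hs
          omega
        · have : (s : ℕ) ≠ t := fun h => hst (Fin.ext h)
          simp only [eta] at hs
          split_ifs at hs <;> omega
      · exfalso
        have h1 := m.2 s hs
        have h2 := hz s
        simp only [eta] at hs'
        split_ifs at hs' <;> omega
    set r : Fin (n + 1) := t.succ with hr
    have hrv : (r : ℕ) = t + 1 := by simp [hr]
    have he : eB q ι ε x r (Finsupp.single m 1) =
        ι (qnum q (m.1 t)) • Finsupp.single m' 1 := by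
      rw [eB_single, hrv, hm', ket_coe, if_neg (by omega), Nat.add_sub_cancel, av_coe]
    have hf : fB q ι ε x r (Finsupp.single m' 1) = Finsupp.single m 1 := by
      have hk : (fun s => (m'.1 s : ℤ) - eta (t + 1) s) = fun s => (m.1 s : ℤ) := by
        funext s
        have : (m.1 s : ℤ) + eta (t + 1) s = m'.1 s := congrFun hm' s
        omega
      rw [fB_single, hrv, hk, ket_coe, if_neg (by omega)]
      split_ifs with h
      · rw [one_smul]
      · -- The position to the right of `t` was empty, so it now holds one particle.
        have hlt : (t : ℕ) + 1 < n := by have := t.2; omega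
        have h1 := congrFun hm' ⟨t + 1, hlt⟩
        have h2 := hz ⟨t + 1, hlt⟩ (by simp)
        simp only [h2, eta] at h1
        have h3 : av m'.1 ((t : ℕ) + 1) = 1 := by
          rw [av, dif_pos hlt]
          simp at h1
          omega
        rw [h3]
        have : qnum q 1 = 1 := by
          rw [qnum, pow_one, pow_one, div_self (q_sub_inv_ne_zero hq0 hq)]
        rw [this, map_one, one_smul]
    have hlt : (pot fun s => (m'.1 s : ℤ)).toNat < N := by
      have h1 := pot_add_eta (fun s => (m.1 s : ℤ)) t.2
      have h2 := pot_nonneg m'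
      rw [hm'] at h1
      omega
    rw [← ih _ hlt m' rfl]
    constructor
    · intro h
      have := hE r _ h
      rw [he] at this
      exact (U.smul_mem_iff ((map_ne_zero ι).2 (qnum_ne_zero hq0 hq ht))).1 this
    · intro h
      rw [← hf]
      exact hF r _ h

end Irreducible

/-- the type-B assignment is an irreducible representation
(defining relations plus irreducibility of `𝒲`), with `x` an indeterminate. -/
theorem statement_6 (q qh : ℂ) (hq0 : q ≠ 0) (hqh : qh ^ 2 = q)
    (hq : ∀ k : ℕ, k ≠ 0 → q ^ k ≠ 1)
    (n : ℕ) [NeZero n] (ε : Fin n → Bool) :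
    (∀ i j : Fin (n + 1),
      kB q (Complex.I * qh⁻¹) (RatFunc.C : ℂ →+* RatFunc ℂ) ε 1 i ∘ₗ
          kB q (Complex.I * qh⁻¹) RatFunc.C ε (-1) i = LinearMap.id ∧
      kB q (Complex.I * qh⁻¹) (RatFunc.C : ℂ →+* RatFunc ℂ) ε (-1) i ∘ₗ
          kB q (Complex.I * qh⁻¹) RatFunc.C ε 1 i = LinearMap.id ∧
      kB q (Complex.I * qh⁻¹) (RatFunc.C : ℂ →+* RatFunc ℂ) ε 1 i ∘ₗ
          kB q (Complex.I * qh⁻¹) RatFunc.C ε 1 j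
        = kB q (Complex.I * qh⁻¹) RatFunc.C ε 1 j ∘ₗ
            kB q (Complex.I * qh⁻¹) RatFunc.C ε 1 i ∧
      kB q (Complex.I * qh⁻¹) (RatFunc.C : ℂ →+* RatFunc ℂ) ε 1 i ∘ₗ
          eB q RatFunc.C ε RatFunc.X j
        = RatFunc.C (DB q ε i j) •
            (eB q RatFunc.C ε RatFunc.X j ∘ₗ kB q (Complex.I * qh⁻¹) RatFunc.C ε 1 i) ∧
      kB q (Complex.I * qh⁻¹) (RatFunc.C : ℂ →+* RatFunc ℂ) ε 1 i ∘ₗ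
          fB q RatFunc.C ε RatFunc.X j
        = (RatFunc.C (DB q ε i j))⁻¹ •
            (fB q RatFunc.C ε RatFunc.X j ∘ₗ kB q (Complex.I * qh⁻¹) RatFunc.C ε 1 i) ∧
      eB q (RatFunc.C : ℂ →+* RatFunc ℂ) ε RatFunc.X i ∘ₗ fB q RatFunc.C ε RatFunc.X j
          - fB q RatFunc.C ε RatFunc.X j ∘ₗ eB q RatFunc.C ε RatFunc.X i
        = if i = j then
            (RatFunc.C ((if (i : ℕ) = 0 ∨ (i : ℕ) = n then Complex.I * qh⁻¹ else q) -
                (if (i : ℕ) = 0 ∨ (i : ℕ) = n then Complex.I * qh⁻¹ else q)⁻¹))⁻¹ •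
              (kB q (Complex.I * qh⁻¹) RatFunc.C ε 1 i -
                kB q (Complex.I * qh⁻¹) RatFunc.C ε (-1) i)
          else 0) ∧
    (∀ U : Submodule (RatFunc ℂ) (W (RatFunc ℂ) ε),
      (∀ r : Fin (n + 1), ∀ v ∈ U,
        eB q (RatFunc.C : ℂ →+* RatFunc ℂ) ε RatFunc.X r v ∈ U ∧
        fB q RatFunc.C ε RatFunc.X r v ∈ U ∧
        kB q (Complex.I * qh⁻¹) RatFunc.C ε 1 r v ∈ U ∧
        kB q (Complex.I * qh⁻¹) RatFunc.C ε (-1) r v ∈ U) →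
      U = ⊥ ∨ U = ⊤) := by
  have hqh0 : qh ≠ 0 := by
    rintro rfl
    exact hq0 (by rw [← hqh]; simp)
  have hp0 : Complex.I * qh⁻¹ ≠ 0 := mul_ne_zero Complex.I_ne_zero (inv_ne_zero hqh0)
  have hpc : (Complex.I * qh⁻¹) ^ 2 = -q⁻¹ := by
    rw [mul_pow, Complex.I_sq, inv_pow, hqh]
    ring
  generalize Complex.I * qh⁻¹ = pc at *
  refine ⟨fun i j => ⟨k_k_neg hq0 hp0 _ 1 i, ?_, k_k hq0 pc _ 1 1 i j, k_e hq0 pc _ _ i j,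
    k_f hq0 pc _ _ i j, ?_⟩, fun U hU => ?_⟩
  · rw [k_k hq0]
    exact k_k_neg hq0 hp0 _ 1 i
  · split_ifs with hij h
    · subst hij
      simpa only [h, if_true] using e_f_self hq0 hq hpc RatFunc.C RatFunc.X_ne_zero i
    · subst hij
      simpa only [h, if_false] using e_f_self hq0 hq hpc RatFunc.C RatFunc.X_ne_zero i
    · exact sub_eq_zero.2 (e_f_commute q RatFunc.C RatFunc.X hij).eq
  · refine or_iff_not_imp_left.2 fun hbot => ?_
    obtain ⟨v, hv, hv0⟩ := U.exists_mem_ne_zero_of_ne_bot hbot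
    obtain ⟨m, hm⟩ := exists_single_mem hq0 hp0 hq RatFunc.C U
      (fun r v hv => (hU r v hv).2.2.1) v hv hv0
    have hvac := single_mem_iff_vac hq0 hq RatFunc.C RatFunc.X U
      (fun r v hv => (hU r v hv).1) (fun r v hv => (hU r v hv).2.1)
    have hall : ∀ m', Finsupp.single m' 1 ∈ U := fun m' => (hvac m').2 ((hvac m).1 hm)
    rw [eq_top_iff]
    intro w _
    induction w using Finsupp.induction_linear with
    | zero => exact U.zero_mem
    | add f g hf hg => exact U.add_mem (hf trivial) (hg trivial)
    | single m' c => simpa using U.smul_mem c (hall m')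

end TetraGQ
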